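/- Let F be a maximal hke collection and let x, y be two distinct elements of ⋃F. Then the following are equivalent: (1) x ≈ y; (2) {x, y} ∩ S ≠ ∅ for every S ∈ F; (3) {x, y} ⊄ S for every S ∈ F. -/

import Mathlib

open Finset

/-- The union of a finite collection of finite sets. -/
def famUnion (Γ : Finset (Finset ℕ)) : Finset ℕ := Γ.sup id

/-- The intersection of a finite collection of finite sets
(equal to the usual intersection when the collection is nonempty). -/
def famInter (Γ : Finset (Finset ℕ)) : Finset ℕ :=
  (Γ.sup id).filter (fun x => ∀ A ∈ Γ, x ∈ A)

/-- `F` is a hereditary König–Egerváry (hke) collection with `α(F) = α`: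
`α` is a positive integer and `|⋃Γ| + |⋂Γ| = 2α` for every nonempty subcollection `Γ` of `F`. -/
def IsHKE (F : Finset (Finset ℕ)) (α : ℕ) : Prop :=
  0 < α ∧ ∀ Γ ⊆ F, Γ.Nonempty → (famUnion Γ).card + (famInter Γ).card = 2 * α

/-- `F` is a maximal hke collection: it is an hke collection and no collection
properly containing it is an hke collection. -/
def IsMaxHKE (F : Finset (Finset ℕ)) : Prop :=
  (∃ α, IsHKE F α) ∧ ∀ F' : Finset (Finset ℕ), F ⊂ F' → ¬ ∃ β, IsHKE F' β

/-- The relation `≈` on `⋃F`: `x ≈ y` iff `x = y` or there are `A, D ∈ F`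
with `A − D = {x}` and `D − A = {y}`. -/
def ApproxRel (F : Finset (Finset ℕ)) (x y : ℕ) : Prop :=
  x = y ∨ ∃ A ∈ F, ∃ D ∈ F, A \ D = {x} ∧ D \ A = {y}

/-!
Call `x` and `y` *mates* if every member of `F` contains exactly one of them. For an hke collection
and nonempty `P, Q ⊆ F`, the sets `⋂P − ⋃Q` and `⋂Q − ⋃P` have the same size. Taking for `P` and `Q`
the members of `F` that contain, respectively avoid, `x` shows that every `x ∈ ⋃F` has a mate, and
taking `P = {A, S}`, `Q = {D}` shows that `x ≈ y` makes `x` and `y` mates.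

Exchanging two mates `x, y` in a member `A` yields a set `A ∆ {x, y}` that can be added to `F`: off
`{x, y}` nothing changes, and on `{x, y}` union and intersection always have total size two. Hence
a maximal `F` is closed under exchanging mates. So mates satisfy `x ≈ y`, and a member in which `x`
and `y` are both present (both absent) is turned into one in which both are absent (both present) by
exchanging each of them with a mate.
-/

open scoped symmDiff

variable {F P Q Γ : Finset (Finset ℕ)} {A S : Finset ℕ} {α x y : ℕ}

theorem mem_famUnion : x ∈ famUnion Γ ↔ ∃ A ∈ Γ, x ∈ A := by
  simp [famUnion, mem_sup]

theorem mem_famInter (hΓ : Γ.Nonempty) : x ∈ famInter Γ ↔ ∀ A ∈ Γ, x ∈ A := by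
  obtain ⟨A, hA⟩ := hΓ
  rw [famInter, mem_filter, ← famUnion, mem_famUnion, and_iff_right_iff_imp]
  exact fun hx ↦ ⟨A, hA, hx A hA⟩

theorem famUnion_singleton : famUnion {A} = A := by
  simp [famUnion]

theorem famInter_singleton : famInter {A} = A := by
  ext; simp [mem_famInter]

theorem famUnion_insert : famUnion (insert A Γ) = A ∪ famUnion Γ := by
  simp [famUnion]

theorem famInter_insert (hΓ : Γ.Nonempty) : famInter (insert A Γ) = A ∩ famInter Γ := by
  ext; simp [mem_famInter, hΓ]

namespace IsHKE

theorem card_famInter_sdiff (hF : IsHKE F α) (hP : P ⊆ F) (hPne : P.Nonempty) (hA : A ∈ F) :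
    #(famInter P \ A) = #(A \ famUnion P) := by
  have without_A := hF.2 P hP hPne
  have with_A := hF.2 (insert A P) (insert_subset hA hP) (insert_nonempty A P)
  rw [famUnion_insert, famInter_insert hPne] at with_A
  have union_split := card_sdiff_add_card A (famUnion P)
  have inter_split := card_sdiff_add_card_inter (famInter P) A
  rw [inter_comm] at inter_split
  omega

theorem card_famInter_sdiff_famUnion (hF : IsHKE F α) (hP : P ⊆ F) (hPne : P.Nonempty)
    (hQ : Q ⊆ F) (hQne : Q.Nonempty) :
    #(famInter P \ famUnion Q) = #(famInter Q \ famUnion P) := by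
  induction hQne using Nonempty.cons_induction generalizing P with
  | singleton A =>
    rw [famUnion_singleton, famInter_singleton]
    exact hF.card_famInter_sdiff hP hPne (singleton_subset_iff.1 hQ)
  | cons A Q _ hQne ih =>
    rw [cons_eq_insert] at hQ ⊢
    obtain ⟨hA, hQ⟩ := insert_subset_iff.1 hQ
    have split (X Y : Finset ℕ) : #(X \ (A ∪ Y)) + #((A ∩ X) \ Y) = #(X \ Y) := by
      rw [union_comm, ← sup_eq_union, ← sdiff_sdiff_left, inter_comm, ← sdiff_inter_right_comm,
        card_sdiff_add_card_inter]
    have ih_P := ih hP hPne hQ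
    have ih_insert := ih (insert_subset hA hP) (insert_nonempty A P) hQ
    rw [famInter_insert hPne, famUnion_insert] at ih_insert
    rw [famInter_insert hQne, famUnion_insert]
    have split_P := split (famInter P) (famUnion Q)
    have split_Q := split (famInter Q) (famUnion P)
    omega

end IsHKE

/-- `x` and `y` are mates in `F` if every member of `F` contains exactly one of them. They need not
lie in `⋃F`: an element of `⋂F` is a mate of every element outside `⋃F`. -/
def IsMate (F : Finset (Finset ℕ)) (x y : ℕ) : Prop :=
  ∀ S ∈ F, (x ∈ S ↔ y ∉ S)

namespace IsMate

theorem symm (h : IsMate F x y) : IsMate F y x :=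
  fun S hS ↦ iff_not_comm.1 (h S hS)

theorem mono (h : IsMate F x y) (hΓ : Γ ⊆ F) : IsMate Γ x y :=
  fun S hS ↦ h S (hΓ hS)

theorem mem_famInter_iff (h : IsMate Γ x y) (hΓ : Γ.Nonempty) :
    x ∈ famInter Γ ↔ y ∉ famUnion Γ := by
  rw [mem_famInter hΓ, mem_famUnion]
  push Not
  exact forall₂_congr h

theorem insert_symmDiff (h : IsMate F x y) (hA : A ∈ F) : IsMate (insert (A ∆ {x, y}) F) x y := by
  refine (forall_mem_insert _ _ _).2 ⟨?_, h⟩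
  simpa [mem_symmDiff] using not_congr (h A hA)

theorem card_famUnion_inter_pair_add (h : IsMate Γ x y) (hΓ : Γ.Nonempty) :
    #(famUnion Γ ∩ {x, y}) + #(famInter Γ ∩ {x, y}) = 2 := by
  have hx := h.mem_famInter_iff hΓ
  have hy := h.symm.mem_famInter_iff hΓ
  have hne : x ≠ y := by
    obtain ⟨A, hA⟩ := hΓ
    rintro rfl
    exact iff_not_self (h A hA)
  by_cases hxU : x ∈ famUnion Γ <;> by_cases hyU : y ∈ famUnion Γ <;>
    simp_all [inter_insert_of_mem, inter_insert_of_notMem]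

theorem card_famUnion_add_card_famInter (h : IsMate Γ x y) (hΓ : Γ.Nonempty) :
    #(famUnion Γ) + #(famInter Γ) =
      #(famUnion Γ \ {x, y}) + #(famInter Γ \ {x, y}) + 2 := by
  have on_pair := h.card_famUnion_inter_pair_add hΓ
  have union_split := card_sdiff_add_card_inter (famUnion Γ) {x, y}
  have inter_split := card_sdiff_add_card_inter (famInter Γ) {x, y}
  omega

end IsMate

theorem famUnion_insert_symmDiff_sdiff (A B : Finset ℕ) :
    famUnion (insert (A ∆ B) Γ) \ B = famUnion (insert A Γ) \ B := by
  ext z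
  simp only [famUnion_insert, mem_sdiff, mem_union, mem_symmDiff]
  tauto

theorem famInter_insert_symmDiff_sdiff (A B : Finset ℕ) :
    famInter (insert (A ∆ B) Γ) \ B = famInter (insert A Γ) \ B := by
  ext z
  simp only [mem_sdiff, mem_famInter (insert_nonempty _ Γ), forall_mem_insert, mem_symmDiff]
  tauto

namespace IsHKE

theorem insert_symmDiff (hF : IsHKE F α) (h : IsMate F x y) (hA : A ∈ F) :
    IsHKE (insert (A ∆ {x, y}) F) α := by
  refine ⟨hF.1, fun Γ hΓ hΓne ↦ ?_⟩
  by_cases hD : A ∆ {x, y} ∈ Γ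
  · obtain ⟨Γ₀, hDΓ₀, rfl⟩ : ∃ Γ₀, A ∆ {x, y} ∉ Γ₀ ∧ insert (A ∆ {x, y}) Γ₀ = Γ :=
      ⟨_, notMem_erase _ Γ, insert_erase hD⟩
    have hΓ₀ : insert A Γ₀ ⊆ F := insert_subset hA ((insert_subset_insert_iff hDΓ₀).1 hΓ)
    have hsum := hF.2 _ hΓ₀ (insert_nonempty A Γ₀)
    rw [(h.mono hΓ₀).card_famUnion_add_card_famInter (insert_nonempty A Γ₀)] at hsum
    rw [((h.insert_symmDiff hA).mono hΓ).card_famUnion_add_card_famInter hΓne,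
      famUnion_insert_symmDiff_sdiff, famInter_insert_symmDiff_sdiff, hsum]
  · exact hF.2 Γ ((subset_insert_iff_of_notMem hD).1 hΓ) hΓne

theorem exists_isMate (hF : IsHKE F α) (hx : x ∈ famUnion F) : ∃ x', IsMate F x x' := by
  by_cases hall : ∀ S ∈ F, x ∈ S
  · obtain ⟨x', hx'⟩ := Infinite.exists_notMem_finset (famUnion F)
    exact ⟨x', fun S hS ↦ iff_of_true (hall S hS) fun hx'S ↦ hx' (mem_famUnion.2 ⟨S, hS, hx'S⟩)⟩
  · push Not at hall
    obtain ⟨A, hA, hxA⟩ := mem_famUnion.1 hx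
    obtain ⟨B, hB, hxB⟩ := hall
    set P := {S ∈ F | x ∈ S}
    set Q := {S ∈ F | x ∉ S}
    have hP : P.Nonempty := ⟨A, mem_filter.2 ⟨hA, hxA⟩⟩
    have hQ : Q.Nonempty := ⟨B, mem_filter.2 ⟨hB, hxB⟩⟩
    have hxPQ : x ∈ famInter P \ famUnion Q := by
      simp [mem_famInter hP, mem_famUnion, P, Q]
    have hcard := hF.card_famInter_sdiff_famUnion (filter_subset _ F) hP (filter_subset _ F) hQ
    obtain ⟨x', hx'⟩ : (famInter Q \ famUnion P).Nonempty :=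
      card_pos.1 (hcard ▸ card_pos.2 ⟨x, hxPQ⟩)
    obtain ⟨hx'Q, hx'P⟩ := mem_sdiff.1 hx'
    refine ⟨x', fun S hS ↦ ⟨fun hxS hx'S ↦ ?_, not_imp_comm.1 fun hxS ↦ ?_⟩⟩
    · exact hx'P (mem_famUnion.2 ⟨S, mem_filter.2 ⟨hS, hxS⟩, hx'S⟩)
    · exact (mem_famInter hQ).1 hx'Q S (mem_filter.2 ⟨hS, hxS⟩)

theorem isMate_of_sdiff_eq_singleton {D : Finset ℕ} (hF : IsHKE F α) (hA : A ∈ F) (hD : D ∈ F)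
    (hx : A \ D = {x}) (hy : D \ A = {y}) : IsMate F x y := by
  intro S hS
  have hcard : #((S ∩ A) \ D) = #(D \ (S ∪ A)) := by
    have := hF.card_famInter_sdiff (P := {S, A}) (by simp [insert_subset_iff, hS, hA])
      (insert_nonempty S {A}) hD
    rwa [famInter_insert (singleton_nonempty A), famUnion_insert, famInter_singleton,
      famUnion_singleton] at this
  rw [inter_sdiff_assoc, hx, union_comm, ← sup_eq_union, ← sdiff_sdiff_left, hy] at hcard
  by_cases hxS : x ∈ S <;> by_cases hyS : y ∈ S <;>
    simp_all [sdiff_eq_self_of_disjoint, sdiff_eq_empty_iff_subset.2]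

end IsHKE

namespace IsMaxHKE

theorem symmDiff_mem (hF : IsMaxHKE F) (h : IsMate F x y) (hA : A ∈ F) : A ∆ {x, y} ∈ F := by
  obtain ⟨⟨α, hα⟩, hmax⟩ := hF
  by_contra hD
  exact hmax _ (ssubset_insert hD) ⟨α, hα.insert_symmDiff h hA⟩

theorem approxRel_iff_isMate (hF : IsMaxHKE F) (hx : x ∈ famUnion F) (hxy : x ≠ y) :
    ApproxRel F x y ↔ IsMate F x y := by
  constructor
  · rintro (rfl | ⟨A, hA, D, hD, hAD, hDA⟩)
    · exact absurd rfl hxy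
    · obtain ⟨⟨α, hα⟩, -⟩ := hF
      exact hα.isMate_of_sdiff_eq_singleton hA hD hAD hDA
  · intro h
    obtain ⟨A, hA, hxA⟩ := mem_famUnion.1 hx
    have hyA : y ∉ A := (h A hA).1 hxA
    refine Or.inr ⟨A, hA, A ∆ {x, y}, hF.symmDiff_mem h hA, ?_, ?_⟩ <;>
    · ext z
      simp only [mem_sdiff, mem_symmDiff, mem_insert, mem_singleton]
      grind

theorem exists_mem_toggle_pair (hF : IsMaxHKE F) (hx : x ∈ famUnion F) (hy : y ∈ famUnion F)
    (hxy : x ≠ y) (hS : S ∈ F) (hiff : x ∈ S ↔ y ∈ S) :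
    ∃ R ∈ F, (x ∈ R ↔ x ∉ S) ∧ (y ∈ R ↔ y ∉ S) := by
  obtain ⟨α, hα⟩ := hF.1
  obtain ⟨x', hx'⟩ := hα.exists_isMate hx
  obtain ⟨y', hy'⟩ := hα.exists_isMate hy
  have hyx' : y ≠ x' := by
    rintro rfl
    exact iff_not_self (hiff.symm.trans (hx' S hS))
  have hxy' : x ≠ y' := by
    rintro rfl
    exact iff_not_self (hiff.trans (hy' S hS))
  refine ⟨_, hF.symmDiff_mem hy' (hF.symmDiff_mem hx' hS), ?_, ?_⟩
  · simp [mem_symmDiff, hxy, hxy']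
  · simp [mem_symmDiff, hxy.symm, hyx']

theorem isMate_iff_forall_mem_or_mem (hF : IsMaxHKE F) (hx : x ∈ famUnion F)
    (hy : y ∈ famUnion F) (hxy : x ≠ y) : IsMate F x y ↔ ∀ S ∈ F, x ∈ S ∨ y ∈ S := by
  refine ⟨fun h S hS ↦ or_iff_not_imp_right.2 (h S hS).2, fun hmeet S hS ↦ ?_⟩
  by_contra hmate
  obtain ⟨R, hR, hxR, hyR⟩ := hF.exists_mem_toggle_pair hx hy hxy hS (by tauto)
  have := hmeet S hS
  have := hmeet R hR
  tauto

theorem isMate_iff_forall_not_mem_and_mem (hF : IsMaxHKE F) (hx : x ∈ famUnion F)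
    (hy : y ∈ famUnion F) (hxy : x ≠ y) : IsMate F x y ↔ ∀ S ∈ F, ¬(x ∈ S ∧ y ∈ S) := by
  refine ⟨fun h S hS ↦ not_and.2 (h S hS).1, fun hsub S hS ↦ ?_⟩
  by_contra hmate
  obtain ⟨R, hR, hxR, hyR⟩ := hF.exists_mem_toggle_pair hx hy hxy hS (by tauto)
  have := hsub S hS
  have := hsub R hR
  tauto

end IsMaxHKE

/-- in a maximal hke collection `F`, for distinct `x, y ∈ ⋃F`, the following
are equivalent: (1) `x ≈ y`; (2) `{x, y} ∩ S ≠ ∅` for every `S ∈ F`;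
(3) `{x, y} ⊄ S` for every `S ∈ F`. -/
theorem approxRel_iff_meets_iff_not_subset (F : Finset (Finset ℕ)) (h : IsMaxHKE F)
    (x y : ℕ) (hx : x ∈ famUnion F) (hy : y ∈ famUnion F) (hxy : x ≠ y) :
    (ApproxRel F x y ↔ ∀ S ∈ F, (({x, y} : Finset ℕ) ∩ S).Nonempty) ∧
    (ApproxRel F x y ↔ ∀ S ∈ F, ¬ (({x, y} : Finset ℕ) ⊆ S)) := by
  have meets_iff (S : Finset ℕ) : (({x, y} : Finset ℕ) ∩ S).Nonempty ↔ x ∈ S ∨ y ∈ S := by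
    simp [Finset.Nonempty, or_and_right, exists_or]
  simp only [meets_iff, insert_subset_iff, singleton_subset_iff]
  rw [h.approxRel_iff_isMate hx hxy]
  exact ⟨h.isMate_iff_forall_mem_or_mem hx hy hxy, h.isMate_iff_forall_not_mem_and_mem hx hy hxy⟩
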